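/- For x = (x₁, x₂) ∈ ℝ² and u ∈ P₂(ℝ²), write m_i(u) = ∫ y_i u(dy) (i = 1, 2) and set f(x, u) = (−2x₁ − x₁³ + ½m₁(u), −2x₂ + x₁ − x₂³ + ½m₂(u)), g(x, u) = ½ diag(1 − x₁, 1 − x₂) and g⁰(x, u) = ¼ diag(−x₁ + m₁(u), −x₂ + m₂(u)). Then for all x, y ∈ ℝ² and u, v ∈ P₂(ℝ²), 2⟨x − y, f(x, u) − f(y, v)⟩ + 3(|g(x, u) − g(y, v)|² + |g⁰(x, u) − g⁰(y, v)|²) ≤ −(11/8)|x − y|² + (5/8) W₂²(u, v), where ⟨·,·⟩ is the Euclidean inner product on ℝ² and |·| denotes the Hilbert–Schmidt norm on 2×2 matrices. -/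

import Mathlib

open MeasureTheory

noncomputable section

/-- Euclidean space ℝ². -/
abbrev R2 := EuclideanSpace ℝ (Fin 2)

/-- The set of couplings of two measures: probability measures on the product
whose first marginal is `u` and second marginal is `v`. -/
def couplings {E : Type*} [MeasurableSpace E] (u v : Measure E) :
    Set (Measure (E × E)) :=
  {π | IsProbabilityMeasure π ∧ π.map Prod.fst = u ∧ π.map Prod.snd = v}

/-- Infimum of the integral of a cost function over all couplings. -/
def WassPow {E : Type*} [MeasurableSpace E] (cost : E → E → ℝ) (u v : Measure E) : ℝ :=
  sInf ((fun π : Measure (E × E) => ∫ z, cost z.1 z.2 ∂π) '' couplings u v)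

/-- The `p`-Wasserstein distance. -/
def Wp {E : Type*} [MeasurableSpace E] [PseudoMetricSpace E] (p : ℝ) (u v : Measure E) : ℝ :=
  (WassPow (fun x y => dist x y ^ p) u v) ^ (1 / p)

/-- Membership in `P₂(ℝ²)`: a probability measure with finite second moment. -/
def MemP2 (u : Measure R2) : Prop :=
  IsProbabilityMeasure u ∧ Integrable (fun x => ‖x‖ ^ 2) u

/-- The `i`-th component of the mean: `m_i(u) = ∫ y_i u(dy)`. -/
def meanComp (u : Measure R2) (i : Fin 2) : ℝ := ∫ y, y i ∂u

/-- The Hilbert–Schmidt (Frobenius) norm of a real `2 × 2` matrix. -/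
def hsNorm (M : Matrix (Fin 2) (Fin 2) ℝ) : ℝ :=
  Real.sqrt (∑ i, ∑ j, (M i j) ^ 2)

/-- The drift of Example 6.2:
`f(x, u) = (−2x₁ − x₁³ + ½m₁(u), −2x₂ + x₁ − x₂³ + ½m₂(u))`. -/
def driftEx2 (x : R2) (u : Measure R2) : R2 :=
  (WithLp.equiv 2 (Fin 2 → ℝ)).symm
    ![-2 * x 0 - (x 0) ^ 3 + (1 / 2) * meanComp u 0,
      -2 * x 1 + x 0 - (x 1) ^ 3 + (1 / 2) * meanComp u 1]

/-- The diffusion coefficient of Example 6.2: `g(x, u) = ½ diag(1 − x₁, 1 − x₂)`. -/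
def diffEx2 (x : R2) (u : Measure R2) : Matrix (Fin 2) (Fin 2) ℝ :=
  (1 / 2 : ℝ) • Matrix.diagonal ![1 - x 0, 1 - x 1]

/-- The common-noise diffusion coefficient of Example 6.2:
`g⁰(x, u) = ¼ diag(−x₁ + m₁(u), −x₂ + m₂(u))`. -/
def diff0Ex2 (x : R2) (u : Measure R2) : Matrix (Fin 2) (Fin 2) ℝ :=
  (1 / 4 : ℝ) • Matrix.diagonal ![-x 0 + meanComp u 0, -x 1 + meanComp u 1]

/-- A measure in `P₂(ℝ²)` has a square integrable identity map. -/
theorem MemP2.memLp_id {u : Measure R2} (hu : MemP2 u) : MemLp (fun x : R2 => x) 2 u :=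
  (memLp_two_iff_integrable_sq_norm aestronglyMeasurable_id).2 hu.2

theorem R2.norm_sq_eq (x : R2) : ‖x‖ ^ 2 = x 0 ^ 2 + x 1 ^ 2 := by
  simp [EuclideanSpace.real_norm_sq_eq]

/-- The squared distance of the means is at most the quadratic cost of any coupling. -/
theorem meanComp_sub_sq_le_integral_coupling {u v : Measure R2} (hu : MemP2 u) (hv : MemP2 v)
    {π : Measure (R2 × R2)} (hπ : π ∈ couplings u v) :
    (meanComp u 0 - meanComp v 0) ^ 2 + (meanComp u 1 - meanComp v 1) ^ 2 ≤
      ∫ z, dist z.1 z.2 ^ (2 : ℝ) ∂π := by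
  obtain ⟨hprob, hfst, hsnd⟩ := hπ
  have h₁ : MemLp (fun z : R2 × R2 => z.1) 2 π :=
    hu.memLp_id.comp_measurePreserving ⟨measurable_fst, hfst⟩
  have h₂ : MemLp (fun z : R2 × R2 => z.2) 2 π :=
    hv.memLp_id.comp_measurePreserving ⟨measurable_snd, hsnd⟩
  have hcost : Integrable (fun z : R2 × R2 => dist z.1 z.2 ^ (2 : ℝ)) π := by
    simpa [dist_eq_norm] using (h₁.sub h₂).integrable_norm_pow two_ne_zero
  have hint₁ (i : Fin 2) : Integrable (fun z : R2 × R2 => z.1 i) π :=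
    (EuclideanSpace.proj (𝕜 := ℝ) i).integrable_comp (h₁.integrable one_le_two)
  have hint₂ (i : Fin 2) : Integrable (fun z : R2 × R2 => z.2 i) π :=
    (EuclideanSpace.proj (𝕜 := ℝ) i).integrable_comp (h₂.integrable one_le_two)
  have hmean₁ (i : Fin 2) : ∫ z, z.1 i ∂π = meanComp u i := by
    rw [meanComp, ← hfst, integral_map measurable_fst.aemeasurable
      (by fun_prop : Continuous fun y : R2 => y i).aestronglyMeasurable]
  have hmean₂ (i : Fin 2) : ∫ z, z.2 i ∂π = meanComp v i := by
    rw [meanComp, ← hsnd, integral_map measurable_snd.aemeasurable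
      (by fun_prop : Continuous fun y : R2 => y i).aestronglyMeasurable]
  have hdiff (i : Fin 2) : Integrable (fun z : R2 × R2 => z.1 i - z.2 i) π :=
    (hint₁ i).sub (hint₂ i)
  have hmean (i : Fin 2) : ∫ z, (z.1 i - z.2 i) ∂π = meanComp u i - meanComp v i := by
    rw [integral_sub (hint₁ i) (hint₂ i), hmean₁, hmean₂]
  set c : Fin 2 → ℝ := fun i => meanComp u i - meanComp v i with hc
  have htan (i : Fin 2) :
      Integrable (fun z : R2 × R2 => 2 * c i * (z.1 i - z.2 i) - c i ^ 2) π :=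
    ((hdiff i).const_mul _).sub (integrable_const _)
  have htan_eq (i : Fin 2) : ∫ z, (2 * c i * (z.1 i - z.2 i) - c i ^ 2) ∂π = c i ^ 2 := by
    rw [integral_sub ((hdiff i).const_mul _) (integrable_const _), integral_const_mul, hmean]
    simp [hc]
    ring
  calc c 0 ^ 2 + c 1 ^ 2
      = ∫ z, ((2 * c 0 * (z.1 0 - z.2 0) - c 0 ^ 2) +
          (2 * c 1 * (z.1 1 - z.2 1) - c 1 ^ 2)) ∂π := by
        rw [integral_add (htan 0) (htan 1), htan_eq, htan_eq]
    _ ≤ ∫ z, dist z.1 z.2 ^ (2 : ℝ) ∂π := by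
        refine integral_mono ((htan 0).add (htan 1)) hcost fun z => ?_
        simp only [Real.rpow_two, dist_eq_norm, R2.norm_sq_eq, PiLp.sub_apply]
        nlinarith [sq_nonneg (z.1 0 - z.2 0 - c 0), sq_nonneg (z.1 1 - z.2 1 - c 1)]

/-- The product measure is a coupling. -/
theorem couplings_nonempty {E : Type*} [MeasurableSpace E] (u v : Measure E)
    [IsProbabilityMeasure u] [IsProbabilityMeasure v] : (couplings u v).Nonempty :=
  ⟨u.prod v, inferInstance, by simp [Measure.map_fst_prod], by simp [Measure.map_snd_prod]⟩

/-- The squared distance of the means is at most the squared `2`-Wasserstein distance. -/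
theorem meanComp_sub_sq_le_Wp_sq {u v : Measure R2} (hu : MemP2 u) (hv : MemP2 v) :
    (meanComp u 0 - meanComp v 0) ^ 2 + (meanComp u 1 - meanComp v 1) ^ 2 ≤
      Wp 2 u v ^ 2 := by
  have := hu.1
  have := hv.1
  have hle : (meanComp u 0 - meanComp v 0) ^ 2 + (meanComp u 1 - meanComp v 1) ^ 2 ≤
      WassPow (fun x y => dist x y ^ (2 : ℝ)) u v := by
    refine le_csInf ((couplings_nonempty u v).image _) ?_
    rintro _ ⟨π, hπ, rfl⟩
    exact meanComp_sub_sq_le_integral_coupling hu hv hπ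
  have hnonneg := (add_nonneg (sq_nonneg _) (sq_nonneg _)).trans hle
  rwa [Wp, ← Real.sqrt_eq_rpow, Real.sq_sqrt hnonneg]

theorem hsNorm_sq (M : Matrix (Fin 2) (Fin 2) ℝ) :
    hsNorm M ^ 2 = M 0 0 ^ 2 + M 0 1 ^ 2 + (M 1 0 ^ 2 + M 1 1 ^ 2) := by
  rw [hsNorm, Real.sq_sqrt (by positivity)]
  simp [Fin.sum_univ_two]

/-- Monotonicity of the cube. -/
theorem sub_mul_cube_sub_cube_nonneg (a b : ℝ) : 0 ≤ (a - b) * (a ^ 3 - b ^ 3) := by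
  have : (a - b) * (a ^ 3 - b ^ 3) =
      (a - b) ^ 2 * ((a + b) ^ 2 + a ^ 2 + b ^ 2) / 2 := by ring
  rw [this]
  positivity

/-- dissipativity condition (A2) of Example 6.2:
`2⟨x−y, f(x,u)−f(y,v)⟩ + 3(|g(x,u)−g(y,v)|² + |g⁰(x,u)−g⁰(y,v)|²)
  ≤ −(11/8)|x−y|² + (5/8) W₂²(u,v)`. -/
theorem dissipativity_ex2 :
    ∀ (x y : R2) (u v : Measure R2), MemP2 u → MemP2 v →
      2 * (inner ℝ (x - y) (driftEx2 x u - driftEx2 y v) : ℝ) +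
          3 * (hsNorm (diffEx2 x u - diffEx2 y v) ^ 2 +
            hsNorm (diff0Ex2 x u - diff0Ex2 y v) ^ 2) ≤
        -(11 / 8) * ‖x - y‖ ^ 2 + (5 / 8) * Wp 2 u v ^ 2 := by
  intro x y u v hu hv
  have hW := meanComp_sub_sq_le_Wp_sq hu hv
  have hinner : inner ℝ (x - y) (driftEx2 x u - driftEx2 y v) =
      (x 0 - y 0) * ((-2 * x 0 - x 0 ^ 3 + 1 / 2 * meanComp u 0) -
        (-2 * y 0 - y 0 ^ 3 + 1 / 2 * meanComp v 0)) +
      (x 1 - y 1) * ((-2 * x 1 + x 0 - x 1 ^ 3 + 1 / 2 * meanComp u 1) -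
        (-2 * y 1 + y 0 - y 1 ^ 3 + 1 / 2 * meanComp v 1)) := by
    simp [driftEx2, PiLp.inner_apply, Fin.sum_univ_two]
    ring
  have hdiff : hsNorm (diffEx2 x u - diffEx2 y v) ^ 2 =
      1 / 4 * ((x 0 - y 0) ^ 2 + (x 1 - y 1) ^ 2) := by
    simp [hsNorm_sq, diffEx2]
    ring
  have hdiff0 : hsNorm (diff0Ex2 x u - diff0Ex2 y v) ^ 2 =
      1 / 16 * (((meanComp u 0 - meanComp v 0) - (x 0 - y 0)) ^ 2 +
        ((meanComp u 1 - meanComp v 1) - (x 1 - y 1)) ^ 2) := by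
    simp [hsNorm_sq, diff0Ex2]
    ring
  rw [hinner, hdiff, hdiff0, R2.norm_sq_eq, PiLp.sub_apply, PiLp.sub_apply]
  have hcube₀ := sub_mul_cube_sub_cube_nonneg (x 0) (y 0)
  have hcube₁ := sub_mul_cube_sub_cube_nonneg (x 1) (y 1)
  linarith [sq_nonneg ((x 0 - y 0) - (x 1 - y 1)),
    sq_nonneg ((x 0 - y 0) - (meanComp u 0 - meanComp v 0)),
    sq_nonneg ((x 1 - y 1) - (meanComp u 1 - meanComp v 1)),
    sq_nonneg (x 0 - y 0), sq_nonneg (x 1 - y 1),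
    sq_nonneg (meanComp u 0 - meanComp v 0), sq_nonneg (meanComp u 1 - meanComp v 1)]
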